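/- Let g : ℝ^n → ℝ be a polynomial, let R > 1, write μ = E_{x∼N(0,1)^n}[g(x)], and suppose HyperVar_R[g] ≤ θ·μ² for some θ ≥ 0. Then (E_{x∼N(0,1)^n}[|g(x) − μ|^{1+R²}])^{1/(1+R²)} ≤ √θ·|μ|; i.e., for x ∼ N(0,1)^n the random variable g(x) is (1+R², √θ)-hyperconcentrated. -/

import Mathlib

open MeasureTheory ProbabilityTheory MvPolynomial

/-- The standard Gaussian measure `N(0,1)^n` on `ℝ^n`. -/
noncomputable def gaussianN (n : ℕ) : Measure (Fin n → ℝ) :=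
  Measure.pi fun _ => gaussianReal 0 1

/-- The normalized probabilists' Hermite polynomial `h_k = H_k / √(k!)`. -/
noncomputable def hermiteFn (k : ℕ) (t : ℝ) : ℝ :=
  ((Polynomial.hermite k).map (Int.castRingHom ℝ)).eval t / Real.sqrt (Nat.factorial k)

/-- The multivariate Hermite polynomial `h_α(x) = ∏ i, h_{α i}(x i)`. -/
noncomputable def hermiteMv {n : ℕ} (α : Fin n → ℕ) (x : Fin n → ℝ) : ℝ :=
  ∏ i, hermiteFn (α i) (x i)

/-- Hermite coefficient `f̂(α) = E_{x ∼ N(0,1)^n}[f(x)·h_α(x)]` of a function. -/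
noncomputable def hermiteCoeffF {n : ℕ} (f : (Fin n → ℝ) → ℝ) (α : Fin n → ℕ) : ℝ :=
  ∫ x, f x * hermiteMv α x ∂(gaussianN n)

/-- Hermite coefficient `ĝ(α)` of a polynomial. -/
noncomputable def hermiteCoeff {n : ℕ} (g : MvPolynomial (Fin n) ℝ) (α : Fin n → ℕ) : ℝ :=
  hermiteCoeffF (fun x => eval x g) α

/-- The squared Gaussian 2-norm `‖g‖₂² = E_{x ∼ N(0,1)^n}[g(x)²]`. -/
noncomputable def norm2sq {n : ℕ} (g : MvPolynomial (Fin n) ℝ) : ℝ :=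
  ∫ x, (eval x g) ^ 2 ∂(gaussianN n)

/-- The `λ`-zoom of `g` at `x`: `g_{λ|x}(y) = g(√(1-λ)·x + √λ·y)`, as a polynomial in `y`. -/
noncomputable def zoom {n : ℕ} (g : MvPolynomial (Fin n) ℝ) (lam : ℝ) (x : Fin n → ℝ) :
    MvPolynomial (Fin n) ℝ :=
  aeval (fun i => C (Real.sqrt (1 - lam) * x i) + C (Real.sqrt lam) * X i) g

/-- `HyperVar_R[g^{≥m}] = Σ_{|α| ≥ m} R^{2|α|}·ĝ(α)²`. -/
noncomputable def hyperVarGE {n : ℕ} (R : ℝ) (m : ℕ) (g : MvPolynomial (Fin n) ℝ) : ℝ :=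
  ∑' α : Fin n → ℕ, if m ≤ ∑ i, α i then R ^ (2 * ∑ i, α i) * hermiteCoeff g α ^ 2 else 0

/-- `HyperVar_R[g] = Σ_{α ≠ 0} R^{2|α|}·ĝ(α)²`. -/
noncomputable def hyperVar {n : ℕ} (R : ℝ) (g : MvPolynomial (Fin n) ℝ) : ℝ :=
  hyperVarGE R 1 g

/-- A nice distribution of polynomials of degree at most `d` on `ℝ^n`, indexed by
`υ ∈ ℝ^I`: each `g υ` has degree at most `d` and each coefficient of `g υ` is a
polynomial of degree at most `d` in `υ`. -/
def NiceFamily (n I d : ℕ) (g : (Fin I → ℝ) → MvPolynomial (Fin n) ℝ) : Prop :=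
  (∀ υ, (g υ).totalDegree ≤ d) ∧
  ∀ m : Fin n →₀ ℕ, ∃ P : MvPolynomial (Fin I) ℝ,
    P.totalDegree ≤ d ∧ ∀ υ, coeff m (g υ) = eval υ P

/-!
Write `q = 1 + R²`. The weights `R^{2|α|}` in the hypervariance are the powers `(q - 1)^{|α|}` for
which Gaussian hypercontractivity reads `‖∑ c_α h_α‖_q² ≤ ∑ (q - 1)^{|α|} c_α²`; applied to the
Hermite expansion of `g - μ` this is `‖g - μ‖_q² ≤ HyperVar_R[g]`.

The inequality starts from the two-point inequality `‖a + b x‖_q² ≤ a² + (q - 1) b²` for a fair sign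
`x`. Minkowski's inequality tensorizes it to the characters of `{±1}^N`. On symmetric functions of
the signs, the normalized level-`k` sum of characters is a Krawtchouk polynomial in
`N^{-1/2} ∑ x_i`, and as `N → ∞` this converges in distribution to `h_k` of a standard Gaussian by
the central limit theorem, so the inequality passes to `h_k` on `N(0,1)`. Tensorizing once more
gives it on `N(0,1)^n`.
-/

lemma mul_rpow_sub_one {x r : ℝ} (hx : 0 ≤ x) (hr : r ≠ 0) : x * x ^ (r - 1) = x ^ r := by
  rw [← Real.rpow_one_add' hx (by simpa using hr), add_sub_cancel]

lemma one_add_rpow_sub_one_sub_rpow_le {m y : ℝ} (hm : 1 ≤ m) (hy : y ∈ Set.Icc (0 : ℝ) 1) :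
    (1 + y) ^ m - (1 - y) ^ m ≤ m * y * ((1 + y) ^ m + (1 - y) ^ m) := by
  have hm0 : 0 < m := by linarith
  let g : ℝ → ℝ := fun t => (1 + t) ^ m * (1 - m * t) - (1 - t) ^ m * (1 + m * t)
  have hderiv (t : ℝ) (ht : t ∈ Set.Icc (0 : ℝ) 1) :
      HasDerivAt g (m * (m + 1) * t * ((1 - t) ^ (m - 1) - (1 + t) ^ (m - 1))) t := by
    have hplus := ((hasDerivAt_id' t).const_add 1).rpow_const (p := m) (.inr hm)
    have hminus := ((hasDerivAt_id' t).const_sub 1).rpow_const (p := m) (.inr hm)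
    have hlin := (hasDerivAt_id' t).const_mul m
    refine ((hplus.mul (hlin.const_sub 1)).sub (hminus.mul (hlin.const_add 1))).congr_deriv ?_
    rw [← mul_rpow_sub_one (x := 1 + t) (by linarith [ht.1]) hm0.ne',
      ← mul_rpow_sub_one (x := 1 - t) (by linarith [ht.2]) hm0.ne']
    ring
  have hanti : AntitoneOn g (Set.Icc 0 1) := by
    refine antitoneOn_of_hasDerivWithinAt_nonpos (convex_Icc 0 1)
      (fun t ht => (hderiv t ht).continuousAt.continuousWithinAt)
      (fun t ht => (hderiv t (interior_subset ht)).hasDerivWithinAt) fun t ht => ?_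
    obtain ⟨ht0, ht1⟩ := interior_subset ht
    have : (1 - t) ^ (m - 1) ≤ (1 + t) ^ (m - 1) :=
      Real.rpow_le_rpow (by linarith) (by linarith) (by linarith)
    exact mul_nonpos_of_nonneg_of_nonpos (by positivity) (by linarith)
  have hle := hanti (Set.left_mem_Icc.2 zero_le_one) hy hy.1
  simp only [g, add_zero, sub_zero, mul_zero, Real.one_rpow, mul_one, sub_self] at hle
  linarith

/- The ratio of the two sides is antitone in `y`: by the previous lemma with `m = q - 1`, its
derivative is nonpositive. -/
lemma one_add_rpow_add_one_sub_rpow_le {q y : ℝ} (hq : 2 ≤ q) (hy : y ∈ Set.Icc (0 : ℝ) 1) :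
    ((1 + y) ^ q + (1 - y) ^ q) / 2 ≤ (1 + (q - 1) * y ^ 2) ^ (q / 2) := by
  have hq0 : 0 < q := by linarith
  have hpos (t : ℝ) : 0 < 1 + (q - 1) * t ^ 2 := by nlinarith [sq_nonneg t]
  let G : ℝ → ℝ := fun t => ((1 + t) ^ q + (1 - t) ^ q) * (1 + (q - 1) * t ^ 2) ^ (-(q / 2))
  have hderiv (t : ℝ) (ht : t ∈ Set.Icc (0 : ℝ) 1) :
      HasDerivAt G (q * (1 + (q - 1) * t ^ 2) ^ (-(q / 2) - 1) *
        ((1 + t) ^ (q - 1) - (1 - t) ^ (q - 1) -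
          (q - 1) * t * ((1 + t) ^ (q - 1) + (1 - t) ^ (q - 1)))) t := by
    have hplus := ((hasDerivAt_id' t).const_add 1).rpow_const (p := q) (.inr (by linarith))
    have hminus := ((hasDerivAt_id' t).const_sub 1).rpow_const (p := q) (.inr (by linarith))
    have hquad := ((((hasDerivAt_id' t).pow 2).const_mul (q - 1)).const_add 1).rpow_const
      (p := -(q / 2)) (.inl (hpos t).ne')
    refine ((hplus.add hminus).mul hquad).congr_deriv ?_
    simp only [Pi.add_apply, Pi.pow_apply]
    rw [← mul_rpow_sub_one (x := 1 + t) (by linarith [ht.1]) hq0.ne',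
      ← mul_rpow_sub_one (x := 1 - t) (by linarith [ht.2]) hq0.ne',
      ← mul_rpow_sub_one (hpos t).le (r := -(q / 2)) (by linarith)]
    ring
  have hanti : AntitoneOn G (Set.Icc 0 1) := by
    refine antitoneOn_of_hasDerivWithinAt_nonpos (convex_Icc 0 1)
      (fun t ht => (hderiv t ht).continuousAt.continuousWithinAt)
      (fun t ht => (hderiv t (interior_subset ht)).hasDerivWithinAt) fun t ht => ?_
    have := one_add_rpow_sub_one_sub_rpow_le (m := q - 1) (by linarith) (interior_subset ht)
    exact mul_nonpos_of_nonneg_of_nonpos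
      (mul_nonneg hq0.le (Real.rpow_nonneg (hpos t).le _)) (by linarith)
  have hle : G y ≤ G 0 := hanti (Set.left_mem_Icc.2 zero_le_one) hy hy.1
  have hzero : G 0 = 2 := by norm_num [G]
  rw [hzero] at hle
  simp only [G, Real.rpow_neg (hpos _).le, ← div_eq_mul_inv] at hle
  rw [div_le_iff₀ (Real.rpow_pos_of_pos (hpos y) _)] at hle
  linarith

lemma add_rpow_add_sub_rpow_le {q a b : ℝ} (hq : 2 ≤ q) (hb : 0 ≤ b) (hba : b ≤ a) :
    ((a + b) ^ q + (a - b) ^ q) / 2 ≤ (a ^ 2 + (q - 1) * b ^ 2) ^ (q / 2) := by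
  obtain rfl | ha := (hb.trans hba).eq_or_lt
  · obtain rfl := le_antisymm hba hb
    simp [Real.zero_rpow (by linarith : q ≠ 0), Real.zero_rpow (by linarith : q / 2 ≠ 0)]
  obtain ⟨y, rfl⟩ : ∃ y, b = a * y := ⟨b / a, by field_simp⟩
  have hy0 : 0 ≤ y := nonneg_of_mul_nonneg_right hb ha
  have hy1 : y ≤ 1 := le_of_mul_le_mul_left (by simpa using hba) ha
  calc ((a + a * y) ^ q + (a - a * y) ^ q) / 2 = a ^ q * (((1 + y) ^ q + (1 - y) ^ q) / 2) := by
        rw [← mul_one_add, ← mul_one_sub, Real.mul_rpow ha.le (by linarith),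
          Real.mul_rpow ha.le (by linarith), ← mul_add, mul_div_assoc]
    _ ≤ a ^ q * (1 + (q - 1) * y ^ 2) ^ (q / 2) := by
        gcongr
        exact one_add_rpow_add_one_sub_rpow_le hq ⟨hy0, hy1⟩
    _ = (a ^ (2 : ℝ) * (1 + (q - 1) * y ^ 2)) ^ (q / 2) := by
        rw [Real.mul_rpow (by positivity) (by nlinarith [sq_nonneg y]), ← Real.rpow_mul ha.le,
          mul_div_cancel₀ _ two_ne_zero]
    _ = (a ^ 2 + (q - 1) * (a * y) ^ 2) ^ (q / 2) := by
        rw [Real.rpow_two]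
        ring_nf

lemma abs_add_rpow_add_abs_sub_rpow_le {q : ℝ} (hq : 2 ≤ q) (a b : ℝ) :
    (|a + b| ^ q + |a - b| ^ q) / 2 ≤ (a ^ 2 + (q - 1) * b ^ 2) ^ (q / 2) := by
  wlog hb : 0 ≤ b generalizing b
  · simpa [add_comm, ← sub_eq_add_neg] using this (-b) (by linarith)
  wlog ha : 0 ≤ a generalizing a
  · have := this (-a) (by linarith)
    rwa [neg_add_eq_sub, ← neg_add', abs_neg, abs_sub_comm, add_comm (|a - b| ^ q), neg_sq] at this
  wlog hba : b ≤ a generalizing a b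
  · have hab := (not_le.1 hba).le
    calc (|a + b| ^ q + |a - b| ^ q) / 2 = (|b + a| ^ q + |b - a| ^ q) / 2 := by
          rw [add_comm a, abs_sub_comm]
      _ ≤ (b ^ 2 + (q - 1) * a ^ 2) ^ (q / 2) := this a ha b hb hab
      _ ≤ (a ^ 2 + (q - 1) * b ^ 2) ^ (q / 2) := by
        have hmul := mul_nonneg (sub_nonneg.2 hq) (sub_nonneg.2 (pow_le_pow_left₀ ha hab 2))
        exact Real.rpow_le_rpow (by nlinarith [sq_nonneg a, sq_nonneg b]) (by linarith)
          (by linarith)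
  rw [abs_of_nonneg (add_nonneg ha hb), abs_of_nonneg (sub_nonneg.2 hba)]
  exact add_rpow_add_sub_rpow_le hq hb hba

section Hypercontractive

open scoped ENNReal

lemma lintegral_rpow_sum_le {Ω ι : Type*} [MeasurableSpace Ω] {μ : Measure Ω} {r : ℝ} (hr : 1 ≤ r)
    {s : Finset ι} {u : ι → Ω → ℝ≥0∞} {A : ι → ℝ≥0∞} (hu : ∀ i ∈ s, AEMeasurable (u i) μ)
    (h : ∀ i ∈ s, ∫⁻ x, u i x ^ r ∂μ ≤ A i ^ r) :
    ∫⁻ x, (∑ i ∈ s, u i x) ^ r ∂μ ≤ (∑ i ∈ s, A i) ^ r := by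
  have hr0 : 0 < r := by linarith
  have hsum := (eLpNorm'_sum_le (fun i hi => (hu i hi).aestronglyMeasurable) hr).trans <|
    Finset.sum_le_sum fun i hi => show eLpNorm' (u i) r μ ≤ A i by
      simpa only [eLpNorm', enorm_eq_self, one_div, ENNReal.rpow_inv_le_iff hr0] using h i hi
  simpa only [eLpNorm', Finset.sum_apply, enorm_eq_self, one_div, ENNReal.rpow_inv_le_iff hr0]
    using hsum

lemma ennreal_sq_rpow_half (a : ℝ≥0∞) (q : ℝ) : (a ^ 2) ^ (q / 2) = a ^ q := by
  rw [← ENNReal.rpow_natCast, ← ENNReal.rpow_mul, Nat.cast_two, mul_div_cancel₀ _ two_ne_zero]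

lemma enorm_rpow_eq_ofReal (a : ℝ) {q : ℝ} (hq : 0 ≤ q) : ‖a‖ₑ ^ q = ENNReal.ofReal (|a| ^ q) := by
  rw [Real.enorm_eq_ofReal_abs, ENNReal.ofReal_rpow_of_nonneg (abs_nonneg a) hq]

lemma enorm_sq_eq_ofReal (a : ℝ) : ‖a‖ₑ ^ 2 = ENNReal.ofReal (a ^ 2) := by
  rw [← enorm_pow, Real.enorm_of_nonneg (sq_nonneg a)]

lemma lintegral_le_liminf_of_tendstoInDistribution {Ω : ℕ → Type*} [∀ n, MeasurableSpace (Ω n)]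
    {μ : ∀ n, Measure (Ω n)} [∀ n, IsProbabilityMeasure (μ n)] {Ω' : Type*} [MeasurableSpace Ω']
    {ν : Measure Ω'} [IsProbabilityMeasure ν] {E : Type*} [TopologicalSpace E] [MeasurableSpace E]
    [OpensMeasurableSpace E] [HasOuterApproxClosed E] {X : ∀ n, Ω n → E} {Z : Ω' → E}
    (hX : TendstoInDistribution X Filter.atTop Z μ ν) {f : E → ℝ} (hf : Continuous f)
    (hf0 : 0 ≤ f) :
    ∫⁻ x, ENNReal.ofReal (f (Z x)) ∂ν ≤
      Filter.liminf (fun n => ∫⁻ x, ENNReal.ofReal (f (X n x)) ∂μ n) Filter.atTop := by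
  have hfm : Measurable fun y => ENNReal.ofReal (f y) := by fun_prop
  have hle := lintegral_le_liminf_lintegral_of_forall_isOpen_measure_le_liminf_measure hf hf0
    fun G hG => ProbabilityMeasure.le_liminf_measure_open_of_tendsto hX.tendsto hG
  simp only [ProbabilityMeasure.coe_mk] at hle
  rw [lintegral_map' hfm.aemeasurable hX.aemeasurable_limit] at hle
  simpa only [lintegral_map' hfm.aemeasurable (hX.forall_aemeasurable _)] using hle

/-- The finite combinations of the functions `φ i` satisfy
`‖∑ c i • φ i‖_q ≤ (∑ w i * c i ^ 2)^(1/2)`, stated for the `q`-th powers. -/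
def Hypercontractive {Ω ι : Type*} [MeasurableSpace Ω] (q : ℝ) (μ : Measure Ω)
    (φ : ι → Ω → ℝ) (w : ι → ℝ≥0∞) : Prop :=
  ∀ (s : Finset ι) (c : ι → ℝ),
    ∫⁻ x, ‖∑ i ∈ s, c i * φ i x‖ₑ ^ q ∂μ ≤ (∑ i ∈ s, w i * ‖c i‖ₑ ^ 2) ^ (q / 2)

namespace Hypercontractive

variable {Ω Ω' ι κ : Type*} [MeasurableSpace Ω] [MeasurableSpace Ω'] {q : ℝ} {μ : Measure Ω}
  {ν : Measure Ω'} {φ : ι → Ω → ℝ} {ψ : κ → Ω' → ℝ} {w : ι → ℝ≥0∞} {v : κ → ℝ≥0∞}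

lemma mono {w' : ι → ℝ≥0∞} (hq : 0 ≤ q) (hφ : Hypercontractive q μ φ w) (hw : w ≤ w') :
    Hypercontractive q μ φ w' := fun s c =>
  (hφ s c).trans <| ENNReal.rpow_le_rpow
    (Finset.sum_le_sum fun i _ => mul_le_mul_left (hw i) _) (by positivity)

lemma of_univ [Fintype ι]
    (h : ∀ c : ι → ℝ, ∫⁻ x, ‖∑ i, c i * φ i x‖ₑ ^ q ∂μ ≤ (∑ i, w i * ‖c i‖ₑ ^ 2) ^ (q / 2)) :
    Hypercontractive q μ φ w := by
  classical
  intro s c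
  have hs := h fun i => if i ∈ s then c i else 0
  have hw (i : ι) : w i * ‖if i ∈ s then c i else 0‖ₑ ^ 2 =
      if i ∈ s then w i * ‖c i‖ₑ ^ 2 else 0 := by
    split_ifs <;> simp
  simpa [ite_mul, hw, Finset.sum_ite_mem] using hs

lemma comp (hφ : Hypercontractive q μ φ w) (hφm : ∀ i, Measurable (φ i)) (e : κ ↪ ι)
    {f : Ω' → Ω} (hf : MeasurePreserving f ν μ) :
    Hypercontractive q ν (fun k x => φ (e k) (f x)) (fun k => w (e k)) := by
  intro s c
  have hmap := hφ (s.map e) (Function.extend e c 0)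
  simp only [Finset.sum_map, e.injective.extend_apply] at hmap
  rwa [← hf.lintegral_comp (by fun_prop)] at hmap

lemma sum_fiberwise [Fintype ι] [DecidableEq κ] (hφ : Hypercontractive q μ φ w) (p : ι → κ)
    (a : ι → ℝ) :
    Hypercontractive q μ (fun k x => ∑ i with p i = k, a i * φ i x)
      (fun k => ∑ i with p i = k, w i * ‖a i‖ₑ ^ 2) := by
  intro s c
  have hleft (x : Ω) : ∑ k ∈ s, c k * ∑ i with p i = k, a i * φ i x =
      ∑ i with p i ∈ s, c (p i) * a i * φ i x := by
    rw [← Finset.sum_fiberwise_eq_sum_filter]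
    refine Finset.sum_congr rfl fun k _ => ?_
    rw [Finset.mul_sum]
    exact Finset.sum_congr rfl fun i hi => by rw [(Finset.mem_filter.1 hi).2, mul_assoc]
  have hright : ∑ k ∈ s, (∑ i with p i = k, w i * ‖a i‖ₑ ^ 2) * ‖c k‖ₑ ^ 2 =
      ∑ i with p i ∈ s, w i * ‖c (p i) * a i‖ₑ ^ 2 := by
    rw [← Finset.sum_fiberwise_eq_sum_filter]
    refine Finset.sum_congr rfl fun k _ => ?_
    rw [Finset.sum_mul]
    exact Finset.sum_congr rfl fun i hi => by
      rw [(Finset.mem_filter.1 hi).2, enorm_mul]; ring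
  simp_rw [hleft, hright]
  exact hφ _ _

/- Integrating in one variable first leaves an `L^{q/2}`-norm of a sum in the other one; `2 ≤ q`
makes Minkowski's inequality available for it. -/
lemma prod (hq : 2 ≤ q) [SFinite μ] [SFinite ν] (hφ : Hypercontractive q μ φ w)
    (hψ : Hypercontractive q ν ψ v) (hφm : ∀ i, Measurable (φ i)) (hψm : ∀ j, Measurable (ψ j)) :
    Hypercontractive q (μ.prod ν) (fun (i : ι × κ) x => φ i.1 x.1 * ψ i.2 x.2)
      (fun i => w i.1 * v i.2) := by
  classical
  intro s c
  let t (i : ι) : Finset κ := {p ∈ s | p.1 = i}.image Prod.snd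
  have hs (p : ι × κ) : p ∈ s ↔ p.1 ∈ s.image Prod.fst ∧ p.2 ∈ t p.1 := by
    simp only [t, Finset.mem_image, Finset.mem_filter]
    grind
  have hleft (x : Ω × Ω') : ∑ p ∈ s, c p * (φ p.1 x.1 * ψ p.2 x.2) =
      ∑ i ∈ s.image Prod.fst, (∑ j ∈ t i, c (i, j) * ψ j x.2) * φ i x.1 := by
    rw [Finset.sum_finset_product s _ t hs]
    exact Finset.sum_congr rfl fun i _ => by
      rw [Finset.sum_mul]; exact Finset.sum_congr rfl fun j _ => by ring
  have hright : ∑ p ∈ s, w p.1 * v p.2 * ‖c p‖ₑ ^ 2 =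
      ∑ i ∈ s.image Prod.fst, w i * ∑ j ∈ t i, v j * ‖c (i, j)‖ₑ ^ 2 := by
    simp_rw [Finset.sum_finset_product s _ t hs, Finset.mul_sum, mul_assoc]
  simp_rw [hleft, hright]
  rw [lintegral_prod_symm _ (by fun_prop)]
  refine (lintegral_mono fun y => hφ _ fun i => ∑ j ∈ t i, c (i, j) * ψ j y).trans ?_
  refine lintegral_rpow_sum_le (by linarith) (fun i _ => by fun_prop) fun i _ => ?_
  simp_rw [ENNReal.mul_rpow_of_nonneg _ _ (by linarith : 0 ≤ q / 2), ennreal_sq_rpow_half]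
  rw [lintegral_const_mul _ (by fun_prop)]
  gcongr
  exact hψ (t i) fun j => c (i, j)

lemma one_of_unique [Unique ι] [IsProbabilityMeasure μ] (hq : 0 < q) :
    Hypercontractive q μ (fun (_ : ι) _ => 1) (fun _ => 1) := by
  intro s c
  obtain rfl | rfl := Finset.subset_singleton_iff.1
    (Finset.subset_univ s |>.trans_eq (Finset.univ_unique (α := ι)))
  · simp [hq]
  · simp [ennreal_sq_rpow_half]

lemma pi (hq : 2 ≤ q) {n : ℕ} {Ω : Fin n → Type*} {ι : Fin n → Type*} [∀ k, MeasurableSpace (Ω k)]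
    {μ : ∀ k, Measure (Ω k)} [∀ k, IsProbabilityMeasure (μ k)] {φ : ∀ k, ι k → Ω k → ℝ}
    {w : ∀ k, ι k → ℝ≥0∞} (hφ : ∀ k, Hypercontractive q (μ k) (φ k) (w k))
    (hφm : ∀ k i, Measurable (φ k i)) :
    Hypercontractive q (Measure.pi μ) (fun (α : ∀ k, ι k) x => ∏ k, φ k (α k) (x k))
      (fun α => ∏ k, w k (α k)) := by
  induction n with
  | zero => simpa using one_of_unique (by linarith)
  | succ n ih =>
    have hprod := (hφ 0).prod hq (ih (fun k => hφ k.succ) fun k => hφm k.succ) (hφm 0)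
      fun α => by fun_prop
    have := hprod.comp (fun i => by fun_prop) (Fin.consEquiv ι).symm.toEmbedding
      (measurePreserving_piFinSuccAbove μ 0)
    simp only [Fin.prod_univ_succ]
    exact this

/- Fatou's lemma for weak convergence is enough here, so no uniform integrability is needed. -/
lemma of_tendstoInDistribution {Ω : ℕ → Type*} [∀ n, MeasurableSpace (Ω n)]
    {μ : ∀ n, Measure (Ω n)} [∀ n, IsProbabilityMeasure (μ n)] [IsProbabilityMeasure ν]
    {E : Type*} [TopologicalSpace E] [MeasurableSpace E] [OpensMeasurableSpace E]
    [HasOuterApproxClosed E] {X : ∀ n, Ω n → E} {Z : Ω' → E} {φ : ι → E → ℝ} (hq : 0 ≤ q)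
    (h : ∀ᶠ n in Filter.atTop, Hypercontractive q (μ n) (fun i x => φ i (X n x)) w)
    (hφ : ∀ i, Continuous (φ i)) (hX : TendstoInDistribution X Filter.atTop Z μ ν) :
    Hypercontractive q ν (fun i x => φ i (Z x)) w := by
  intro s c
  simp_rw [enorm_rpow_eq_ofReal _ hq]
  refine (lintegral_le_liminf_of_tendstoInDistribution hX (f := fun y => |∑ i ∈ s, c i * φ i y| ^ q)
    ((by fun_prop : Continuous fun y => |∑ i ∈ s, c i * φ i y|).rpow_const fun _ => .inr hq)
    fun _ => by positivity).trans ?_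
  refine Filter.liminf_le_of_frequently_le' (h.mono fun n hn => ?_).frequently
  simpa only [enorm_rpow_eq_ofReal _ hq] using hn s c

lemma integral_abs_sum_rpow_le {r : ι → ℝ} (hq : 0 ≤ q) (hr : 0 ≤ r)
    (hφ : Hypercontractive q μ φ fun i => ENNReal.ofReal (r i)) (hφm : ∀ i, Measurable (φ i))
    (s : Finset ι) (c : ι → ℝ) :
    ∫ x, |∑ i ∈ s, c i * φ i x| ^ q ∂μ ≤ (∑ i ∈ s, r i * c i ^ 2) ^ (q / 2) := by
  have hterm (i : ι) : 0 ≤ r i * c i ^ 2 := mul_nonneg (hr i) (sq_nonneg _)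
  have hsum := Finset.sum_nonneg fun i (_ : i ∈ s) => hterm i
  rw [integral_eq_lintegral_of_nonneg_ae (ae_of_all _ fun x => by positivity)
    (Measurable.aestronglyMeasurable (by fun_prop))]
  refine ENNReal.toReal_le_of_le_ofReal (by positivity) ?_
  have hs := hφ s c
  simp_rw [enorm_rpow_eq_ofReal _ hq, enorm_sq_eq_ofReal, ← ENNReal.ofReal_mul (hr _)] at hs
  rwa [← ENNReal.ofReal_sum_of_nonneg fun i _ => hterm i,
    ENNReal.ofReal_rpow_of_nonneg hsum (by positivity)] at hs

end Hypercontractive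

end Hypercontractive

section SignSums

variable {R : Type*}

lemma multiset_esymm_zero [CommSemiring R] (s : Multiset R) : s.esymm 0 = 1 := by
  simp [Multiset.esymm]

lemma multiset_esymm_one [CommSemiring R] (s : Multiset R) : s.esymm 1 = s.sum := by
  simp [Multiset.esymm, Multiset.powersetCard_one]

lemma multiset_esymm_cons_succ [CommSemiring R] (a : R) (s : Multiset R) (k : ℕ) :
    (a ::ₘ s).esymm (k + 1) = s.esymm (k + 1) + a * s.esymm k := by
  simp [Multiset.esymm, Multiset.powersetCard_cons, Multiset.sum_map_mul_left]

/- Expand `s.sum * s.esymm (k + 1)`: since `x ^ 2 = 1`, each term of `s.esymm k` arises once for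
every one of the `s.card - k` elements it omits. -/
lemma add_two_mul_multiset_esymm [CommRing R] {s : Multiset R} (hs : ∀ x ∈ s, x ^ 2 = 1) (k : ℕ) :
    (k + 2) * s.esymm (k + 2) = s.sum * s.esymm (k + 1) - (s.card - k) * s.esymm k := by
  induction s using Multiset.induction generalizing k with
  | empty => cases k <;> simp [Multiset.esymm, Multiset.powersetCard_zero_right]
  | cons a s ih =>
    have ha : a ^ 2 = 1 := hs a (Multiset.mem_cons_self a s)
    replace ih := ih fun x hx => hs x (Multiset.mem_cons_of_mem hx)
    rw [multiset_esymm_cons_succ, multiset_esymm_cons_succ, Multiset.sum_cons, Multiset.card_cons]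
    cases k with
    | zero =>
      have ih₀ := ih 0
      simp only [zero_add, multiset_esymm_one, multiset_esymm_zero, Nat.reduceAdd] at ih₀ ⊢
      push_cast at ih₀ ⊢
      linear_combination ih₀ - ha
    | succ k =>
      rw [multiset_esymm_cons_succ]
      push_cast
      have ih₁ := ih (k + 1)
      push_cast at ih₁
      linear_combination ih₁ + a * ih k - s.esymm (k + 1) * ha

/-- Rescaled Krawtchouk polynomials, defined by their three-term recurrence: for signs `x_i = ±1`,
`krawtchouk N⁻¹ (N^{-1/2} ∑ x_i) k = N^{-k/2} * k! * e_k(x)`. As polynomials in `ε` and `t` they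
deform the probabilists' Hermite polynomials, which are the case `ε = 0`. -/
noncomputable def krawtchouk (ε t : ℝ) : ℕ → ℝ
  | 0 => 1
  | 1 => t
  | k + 2 => t * krawtchouk ε t (k + 1) - (k + 1) * (1 - k * ε) * krawtchouk ε t k

lemma continuous_krawtchouk (k : ℕ) : Continuous fun p : ℝ × ℝ => krawtchouk p.2 p.1 k := by
  induction k using Nat.twoStepInduction with
  | zero => exact continuous_const
  | one => exact continuous_fst
  | more k ih₀ ih₁ => simp only [krawtchouk]; fun_prop

lemma krawtchouk_inv_card {s : Multiset ℝ} (hs : ∀ x ∈ s, x ^ 2 = 1) (hs0 : s ≠ 0) (k : ℕ) :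
    krawtchouk (s.card : ℝ)⁻¹ ((√s.card)⁻¹ * s.sum) k =
      (√s.card)⁻¹ ^ k * k.factorial * s.esymm k := by
  have hsq : (√s.card)⁻¹ ^ 2 = (s.card : ℝ)⁻¹ := by rw [inv_pow, Real.sq_sqrt (by positivity)]
  have hcard : 1 - (√s.card)⁻¹ ^ 2 * s.card = 0 := by
    rw [hsq, inv_mul_cancel₀ (by simpa using hs0), sub_self]
  induction k using Nat.twoStepInduction with
  | zero => simp [krawtchouk, multiset_esymm_zero]
  | one => simp [krawtchouk, multiset_esymm_one]
  | more k ih₀ ih₁ =>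
    calc krawtchouk (s.card : ℝ)⁻¹ ((√s.card)⁻¹ * s.sum) (k + 2)
        = (√s.card)⁻¹ ^ (k + 2) * (k + 1).factorial *
            (s.sum * s.esymm (k + 1) - (s.card - k) * s.esymm k) := by
          rw [krawtchouk, ih₀, ih₁, Nat.factorial_succ, ← hsq]
          push_cast
          linear_combination (-(√s.card)⁻¹ ^ k * (k + 1) * k.factorial * s.esymm k) * hcard
      _ = (√s.card)⁻¹ ^ (k + 2) * (k + 2).factorial * s.esymm (k + 2) := by
          rw [← add_two_mul_multiset_esymm hs, Nat.factorial_succ (k + 1)]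
          push_cast
          ring

/-- The probabilists' Hermite polynomial `H_k` over `ℝ`. -/
noncomputable def realHermite (k : ℕ) : Polynomial ℝ :=
  (Polynomial.hermite k).map (Int.castRingHom ℝ)

lemma realHermite_zero : realHermite 0 = 1 := by simp [realHermite]

lemma realHermite_succ (k : ℕ) : realHermite (k + 1) =
    Polynomial.X * realHermite k - Polynomial.derivative (realHermite k) := by
  simp [realHermite, Polynomial.hermite_succ, Polynomial.derivative_map]

lemma derivative_realHermite_succ (k : ℕ) :
    Polynomial.derivative (realHermite (k + 1)) = (k + 1) * realHermite k := by
  induction k with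
  | zero => simp [realHermite]
  | succ k ih =>
    rw [realHermite_succ (k + 1), Polynomial.derivative_sub, Polynomial.derivative_mul,
      Polynomial.derivative_X, ih, realHermite_succ k]
    simp only [one_mul, Polynomial.derivative_mul, Polynomial.derivative_add,
      Polynomial.derivative_natCast, Polynomial.derivative_one, add_zero, zero_mul, zero_add,
      Nat.cast_add, Nat.cast_one]
    ring

lemma krawtchouk_zero_left (t : ℝ) (k : ℕ) : krawtchouk 0 t k = (realHermite k).eval t := by
  induction k using Nat.twoStepInduction with
  | zero => simp [krawtchouk, realHermite]
  | one => simp [krawtchouk, realHermite]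
  | more k ih₀ ih₁ =>
    rw [krawtchouk, ih₀, ih₁, realHermite_succ (k + 1), derivative_realHermite_succ]
    simp

end SignSums

section CoinFlips

open scoped ENNReal

/-- The law of a fair coin flip. -/
noncomputable def fairCoin : Measure Bool := uniformOn Set.univ

instance : IsProbabilityMeasure fairCoin :=
  isProbabilityMeasure_uniformOn Set.finite_univ Set.univ_nonempty

/-- The sign `±1` recorded by a coin flip. -/
def boolSign (b : Bool) : ℝ := if b then 1 else -1

lemma boolSign_sq (b : Bool) : boolSign b ^ 2 = 1 := by cases b <;> simp [boolSign]

lemma fairCoin_singleton (b : Bool) : fairCoin {b} = 2⁻¹ := by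
  rw [fairCoin, uniformOn_univ]
  simp

lemma lintegral_fairCoin (f : Bool → ℝ≥0∞) : ∫⁻ b, f b ∂fairCoin = (f true + f false) / 2 := by
  simp only [lintegral_fintype, fairCoin_singleton, Fintype.sum_bool, ← add_mul, div_eq_mul_inv]

lemma integral_fairCoin (f : Bool → ℝ) : ∫ b, f b ∂fairCoin = (f true + f false) / 2 := by
  rw [integral_fintype .of_finite]
  simp only [measureReal_def, fairCoin_singleton, ENNReal.toReal_inv, ENNReal.toReal_ofNat,
    Fintype.sum_bool, smul_eq_mul]
  ring

lemma hypercontractive_fairCoin {q : ℝ} (hq : 2 ≤ q) :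
    Hypercontractive q fairCoin (fun (b x : Bool) => if b then boolSign x else 1)
      (fun b => if b then ENNReal.ofReal (q - 1) else 1) := by
  refine .of_univ fun c => ?_
  have hq1 : 0 ≤ q - 1 := by linarith
  have hbound := ENNReal.ofReal_le_ofReal (abs_add_rpow_add_abs_sub_rpow_le hq (c false) (c true))
  have hright : ∑ b, (if b then ENNReal.ofReal (q - 1) else 1) * ‖c b‖ₑ ^ 2 =
      ENNReal.ofReal (c false ^ 2 + (q - 1) * c true ^ 2) := by
    rw [Fintype.sum_bool, ENNReal.ofReal_add (by positivity) (by positivity),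
      ENNReal.ofReal_mul hq1, enorm_sq_eq_ofReal, enorm_sq_eq_ofReal]
    simp [add_comm]
  rw [lintegral_fairCoin, hright, ENNReal.ofReal_rpow_of_nonneg (by positivity) (by linarith)]
  convert hbound using 1
  simp_rw [enorm_rpow_eq_ofReal _ (by linarith : 0 ≤ q)]
  rw [ENNReal.ofReal_div_of_pos two_pos, ENNReal.ofReal_add (by positivity) (by positivity)]
  simp [boolSign, add_comm, sub_eq_add_neg]

lemma hypercontractive_walsh {q : ℝ} (hq : 2 ≤ q) (N : ℕ) :
    Hypercontractive q (Measure.pi fun _ : Fin N => fairCoin)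
      (fun (A : Finset (Fin N)) x => ∏ i ∈ A, boolSign (x i))
      (fun A => ENNReal.ofReal (q - 1) ^ A.card) := by
  have hpi := Hypercontractive.pi hq (fun _ : Fin N => hypercontractive_fairCoin hq)
    fun _ _ => measurable_of_finite _
  have hmem : Function.Injective fun (A : Finset (Fin N)) i => decide (i ∈ A) := fun A B hAB => by
    ext i
    simpa using congrFun hAB i
  simpa [Finset.prod_ite_mem] using
    hpi.comp (fun _ => measurable_of_finite _) ⟨_, hmem⟩ (.id _)

lemma krawtchouk_sum_boolSign {N : ℕ} (hN : N ≠ 0) (x : Fin N → Bool) (k : ℕ) :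
    krawtchouk (N : ℝ)⁻¹ ((√N)⁻¹ * ∑ i, boolSign (x i)) k / √k.factorial =
      ∑ A : Finset (Fin N) with A.card = k,
        (√N)⁻¹ ^ A.card * √A.card.factorial * ∏ i ∈ A, boolSign (x i) := by
  have hk := krawtchouk_inv_card (s := Finset.univ.val.map fun i => boolSign (x i))
    (by simp only [Multiset.mem_map]; rintro _ ⟨i, -, rfl⟩; exact boolSign_sq _)
    (by simpa [← Multiset.card_eq_zero]) k
  simp only [Multiset.card_map, Finset.card_val, Finset.card_univ, Fintype.card_fin] at hk
  rw [Finset.sum_eq_multiset_sum, hk, Finset.esymm_map_val, ← Finset.univ_filter_card_eq,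
    mul_div_right_comm, mul_div_assoc, Real.div_sqrt, Finset.mul_sum]
  exact Finset.sum_congr rfl fun A hA => by rw [(Finset.mem_filter.1 hA).2]

lemma choose_mul_factorial_div_pow_le_one (N k : ℕ) :
    (N.choose k : ℝ) * (k.factorial / (N : ℝ) ^ k) ≤ 1 := by
  rw [← mul_div_assoc, mul_comm, ← Nat.cast_mul, ← Nat.descFactorial_eq_factorial_mul_choose]
  exact div_le_one_of_le₀ (mod_cast Nat.descFactorial_le_pow N k) (by positivity)

lemma hypercontractive_krawtchouk {q : ℝ} (hq : 2 ≤ q) {N : ℕ} (hN : N ≠ 0) :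
    Hypercontractive q (Measure.pi fun _ : Fin N => fairCoin)
      (fun k x => krawtchouk (N : ℝ)⁻¹ ((√N)⁻¹ * ∑ i, boolSign (x i)) k / √k.factorial)
      (fun k => ENNReal.ofReal (q - 1) ^ k) := by
  let a (A : Finset (Fin N)) : ℝ := (√N)⁻¹ ^ A.card * √A.card.factorial
  have ha (A : Finset (Fin N)) :
      ‖a A‖ₑ ^ 2 = ENNReal.ofReal (A.card.factorial / (N : ℝ) ^ A.card) := by
    rw [← enorm_pow, Real.enorm_of_nonneg (sq_nonneg _), mul_pow, ← pow_mul, mul_comm _ 2, pow_mul,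
      inv_pow, Real.sq_sqrt (by positivity), Real.sq_sqrt (by positivity), inv_pow, mul_comm,
      div_eq_mul_inv]
  simp_rw [krawtchouk_sum_boolSign hN]
  refine ((hypercontractive_walsh hq N).sum_fiberwise Finset.card a).mono (by linarith) fun k => ?_
  calc ∑ A : Finset (Fin N) with A.card = k, ENNReal.ofReal (q - 1) ^ A.card * ‖a A‖ₑ ^ 2
      = ∑ A : Finset (Fin N) with A.card = k,
          ENNReal.ofReal (q - 1) ^ k * ENNReal.ofReal (k.factorial / (N : ℝ) ^ k) :=
        Finset.sum_congr rfl fun A hA => by rw [ha, (Finset.mem_filter.1 hA).2]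
    _ = ENNReal.ofReal (q - 1) ^ k *
          ENNReal.ofReal (N.choose k * (k.factorial / (N : ℝ) ^ k)) := by
        rw [Finset.sum_const, Finset.univ_filter_card_eq, Finset.card_powersetCard,
          Finset.card_univ, Fintype.card_fin, nsmul_eq_mul, mul_left_comm,
          ENNReal.ofReal_mul (Nat.cast_nonneg _), ENNReal.ofReal_natCast]
    _ ≤ ENNReal.ofReal (q - 1) ^ k := mul_le_of_le_one_right' <|
        ENNReal.ofReal_le_one.2 (choose_mul_factorial_div_pow_le_one N k)

lemma tendstoInDistribution_sum_boolSign :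
    TendstoInDistribution
      (fun (n : ℕ) (ω : ℕ → Bool) => (√n)⁻¹ * ∑ i ∈ Finset.range n, boolSign (ω i)) Filter.atTop id
      (fun _ => Measure.infinitePi fun _ : ℕ => fairCoin) (gaussianReal 0 1) := by
  have hmp (i : ℕ) := measurePreserving_eval_infinitePi (fun _ : ℕ => fairCoin) i
  have hm : Measurable boolSign := measurable_of_finite _
  have hint (f : Bool → ℝ) :
      ∫ ω, f (ω 0) ∂Measure.infinitePi (fun _ : ℕ => fairCoin) = (f true + f false) / 2 := by
    rw [← integral_fairCoin]
    exact (hmp 0).hasLaw.integral_comp (measurable_of_finite f).aestronglyMeasurable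
  refine tendstoInDistribution_inv_sqrt_mul_sum .id ?_ ?_ (iIndepFun_infinitePi fun _ => hm)
    fun i => IdentDistrib.comp ⟨(hmp i).aemeasurable, (hmp 0).aemeasurable, ?_⟩ hm
  · rw [hint]; simp [boolSign]
  · simp [boolSign_sq]
  · rw [(hmp i).map_eq, (hmp 0).map_eq]

lemma measurePreserving_restrict_infinitePi {Ω : Type*} [MeasurableSpace Ω] (μ : Measure Ω)
    [IsProbabilityMeasure μ] (N : ℕ) :
    MeasurePreserving (fun (ω : ℕ → Ω) (i : Fin N) => ω i)
      (Measure.infinitePi fun _ => μ) (Measure.pi fun _ => μ) := by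
  refine ⟨by fun_prop, ?_⟩
  rw [Measure.map_infinitePi_infinitePi_of_inj Fin.val_injective, Measure.infinitePi_eq_pi]

lemma hermiteFn_eq (k : ℕ) (t : ℝ) : hermiteFn k t = (realHermite k).eval t / √k.factorial := rfl

lemma hypercontractive_gaussianReal {q : ℝ} (hq : 2 ≤ q) :
    Hypercontractive q (gaussianReal 0 1) hermiteFn (fun k => ENNReal.ofReal (q - 1) ^ k) := by
  have hconst : TendstoInMeasure (Measure.infinitePi fun _ : ℕ => fairCoin)
      (fun (n : ℕ) (_ : ℕ → Bool) => (n : ℝ)⁻¹) Filter.atTop fun _ => 0 :=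
    tendstoInMeasure_of_tendsto_ae (fun _ => by fun_prop)
      (ae_of_all _ fun _ => tendsto_inv_atTop_nhds_zero_nat)
  have hlim := tendstoInDistribution_sum_boolSign.prodMk_of_tendstoInMeasure_const _ _ _ hconst
    fun _ => aemeasurable_const
  have := Hypercontractive.of_tendstoInDistribution (by linarith)
    (φ := fun k p => krawtchouk p.2 p.1 k / √k.factorial)
    (w := fun k => ENNReal.ofReal (q - 1) ^ k) ?_
    (fun k => (continuous_krawtchouk k).div_const _) hlim
  · simpa only [krawtchouk_zero_left, id, ← hermiteFn_eq] using this
  · filter_upwards [Filter.eventually_ne_atTop 0] with n hn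
    have := (hypercontractive_krawtchouk hq hn).comp (fun _ => measurable_of_finite _) (.refl ℕ)
      (measurePreserving_restrict_infinitePi fairCoin n)
    simpa only [Finset.sum_range, Function.Embedding.refl_apply] using this

end CoinFlips

section HermiteExpansion

lemma integrable_polynomial_gaussianReal (m : ℝ) (v : NNReal) (p : Polynomial ℝ) :
    Integrable (fun t => p.eval t) (gaussianReal m v) := by
  induction p using Polynomial.induction_on' with
  | add p r hp hr => simp only [Polynomial.eval_add]; exact hp.add hr
  | monomial k a =>
    have hk := (memLp_id_gaussianReal' (μ := m) (v := v) k (by simp)).integrable_norm_pow'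
    simp only [Polynomial.eval_monomial]
    refine Integrable.const_mul ?_ a
    rw [← integrable_norm_iff (by fun_prop)]
    simpa only [norm_pow, id] using hk

lemma integrable_polynomial_mul_gaussianPDFReal (m : ℝ) (v : NNReal) (p : Polynomial ℝ) :
    Integrable fun t => p.eval t * gaussianPDFReal m v t := by
  obtain rfl | hv := eq_or_ne v 0
  · simp [gaussianPDFReal_zero_var]
  have h := integrable_polynomial_gaussianReal m v p
  rw [gaussianReal_of_var_ne_zero _ hv, integrable_withDensity_iff_integrable_smul'
    (measurable_gaussianPDF m v) (ae_of_all _ fun _ => gaussianPDF_lt_top)] at h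
  simpa [mul_comm] using h

lemma hasDerivAt_gaussianPDFReal (m : ℝ) (v : NNReal) (t : ℝ) :
    HasDerivAt (gaussianPDFReal m v) (-((t - m) / v) * gaussianPDFReal m v t) t := by
  have hexponent : HasDerivAt (fun x : ℝ => -(x - m) ^ 2 / (2 * v)) (-((t - m) / v)) t := by
    refine ((((hasDerivAt_id t).sub_const m).pow 2).neg.div_const _).congr_deriv ?_
    simp only [id, Nat.cast_ofNat]
    ring
  rw [gaussianPDFReal_def]
  exact (hexponent.exp.const_mul _).congr_deriv (by ring)

lemma integral_X_sub_C_mul_gaussianReal (m : ℝ) (v : NNReal) (p : Polynomial ℝ) :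
    ∫ t, ((Polynomial.X - Polynomial.C m) * p).eval t ∂(gaussianReal m v) =
      v * ∫ t, (Polynomial.derivative p).eval t ∂(gaussianReal m v) := by
  obtain rfl | hv := eq_or_ne v 0
  · simp [gaussianReal_zero_var]
  have hv' : (v : ℝ) ≠ 0 := mod_cast hv
  let r := v • Polynomial.derivative p - (Polynomial.X - Polynomial.C m) * p
  have hderiv (t : ℝ) : HasDerivAt (fun t => v * (p.eval t * gaussianPDFReal m v t))
      (r.eval t * gaussianPDFReal m v t) t := by
    refine (((p.hasDerivAt t).mul (hasDerivAt_gaussianPDFReal m v t)).const_mul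
      (v : ℝ)).congr_deriv ?_
    simp only [r, Polynomial.eval_sub, Polynomial.eval_mul, Polynomial.eval_X, Polynomial.eval_C,
      Polynomial.eval_smul, NNReal.smul_def, smul_eq_mul]
    field_simp
    ring
  have hzero := integral_eq_zero_of_hasDerivAt_of_integrable hderiv
    (integrable_polynomial_mul_gaussianPDFReal m v r)
    ((integrable_polynomial_mul_gaussianPDFReal m v p).const_mul _)
  rw [eq_comm, ← sub_eq_zero, ← integral_const_mul,
    ← integral_sub ((integrable_polynomial_gaussianReal m v _).const_mul _)
      (integrable_polynomial_gaussianReal m v _), integral_gaussianReal_eq_integral_smul hv]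
  simpa only [r, Polynomial.eval_sub, Polynomial.eval_smul, NNReal.smul_def, smul_eq_mul,
    mul_comm (gaussianPDFReal m v _)] using hzero

lemma integral_realHermite_succ_mul (k : ℕ) (p : Polynomial ℝ) :
    ∫ t, (realHermite (k + 1) * p).eval t ∂(gaussianReal 0 1) =
      ∫ t, (realHermite k * Polynomial.derivative p).eval t ∂(gaussianReal 0 1) := by
  have hX := integral_X_sub_C_mul_gaussianReal 0 1 (realHermite k * p)
  rw [NNReal.coe_one, one_mul] at hX
  rw [← sub_eq_zero, ← integral_sub (integrable_polynomial_gaussianReal 0 1 _)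
    (integrable_polynomial_gaussianReal 0 1 _)] at hX ⊢
  rw [← hX]
  congr! 2 with t
  simp only [realHermite_succ, Polynomial.derivative_mul, Polynomial.eval_sub, Polynomial.eval_X,
    Polynomial.eval_C, Polynomial.eval_mul, Polynomial.eval_add]
  ring

lemma integral_realHermite_mul (j k : ℕ) :
    ∫ t, (realHermite j * realHermite k).eval t ∂(gaussianReal 0 1) =
      if j = k then (k.factorial : ℝ) else 0 := by
  induction j generalizing k with
  | zero =>
    cases k with
    | zero => simp [realHermite_zero]
    | succ k =>
      rw [mul_comm, integral_realHermite_succ_mul, realHermite_zero]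
      simp
  | succ j ih =>
    rw [integral_realHermite_succ_mul]
    cases k with
    | zero => simp [realHermite_zero]
    | succ k =>
      have hk (t : ℝ) : (realHermite j * ((k + 1) * realHermite k)).eval t =
          (k + 1) * (realHermite j * realHermite k).eval t := by
        simp only [Polynomial.eval_mul, Polynomial.eval_add, Polynomial.eval_natCast,
          Polynomial.eval_one]
        ring
      simp_rw [derivative_realHermite_succ, hk, integral_const_mul, ih k, Nat.factorial_succ]
      simp

lemma hermiteFn_mul_hermiteFn (j k : ℕ) (t : ℝ) : hermiteFn j t * hermiteFn k t =
    (realHermite j * realHermite k).eval t / (√j.factorial * √k.factorial) := by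
  rw [Polynomial.eval_mul, hermiteFn_eq, hermiteFn_eq, div_mul_div_comm]

lemma integral_hermiteFn_mul_hermiteFn (j k : ℕ) :
    ∫ t, hermiteFn j t * hermiteFn k t ∂(gaussianReal 0 1) = if j = k then 1 else 0 := by
  simp_rw [hermiteFn_mul_hermiteFn]
  rw [integral_div, integral_realHermite_mul]
  split_ifs with h
  · rw [h, Real.mul_self_sqrt (by positivity), div_self (by positivity)]
  · rw [zero_div]

lemma integrable_hermiteFn_mul_hermiteFn (j k : ℕ) :
    Integrable (fun t => hermiteFn j t * hermiteFn k t) (gaussianReal 0 1) := by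
  simp_rw [hermiteFn_mul_hermiteFn]
  exact (integrable_polynomial_gaussianReal 0 1 _).div_const _

/- At `k = 0` the truncated `k - 1` does no harm, its coefficient being `√0`. -/
lemma mul_hermiteFn (k : ℕ) (t : ℝ) :
    t * hermiteFn k t = √(k + 1) * hermiteFn (k + 1) t + √k * hermiteFn (k - 1) t := by
  have hsucc (m : ℕ) : √((m + 1).factorial : ℝ) = √(m + 1) * √m.factorial := by
    rw [← Real.sqrt_mul (by positivity), Nat.factorial_succ]
    push_cast
    rfl
  cases k with
  | zero => simp [hermiteFn_eq, realHermite]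
  | succ k =>
    have hsq : √((k : ℝ) + 1) ^ 2 = k + 1 := Real.sq_sqrt (by positivity)
    have hpos : √((k : ℝ) + 1 + 1) ≠ 0 := by positivity
    have hpos' : √((k : ℝ) + 1) ≠ 0 := by positivity
    simp only [hermiteFn_eq, realHermite_succ (k + 1), derivative_realHermite_succ, hsucc,
      Polynomial.eval_sub, Polynomial.eval_mul, Polynomial.eval_X, Polynomial.eval_add,
      Polynomial.eval_natCast, Polynomial.eval_one, add_tsub_cancel_right]
    push_cast
    field_simp
    rw [hsq]
    ring

lemma measurable_hermiteFn (k : ℕ) : Measurable (hermiteFn k) := by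
  unfold hermiteFn
  fun_prop

lemma hypercontractive_gaussianN {q : ℝ} (hq : 2 ≤ q) (n : ℕ) :
    Hypercontractive q (gaussianN n) hermiteMv
      (fun α => ENNReal.ofReal ((q - 1) ^ ∑ i, α i)) := by
  have hpi := Hypercontractive.pi hq (fun _ : Fin n => hypercontractive_gaussianReal hq)
    fun _ => measurable_hermiteFn
  simp_rw [ENNReal.ofReal_pow (by linarith : 0 ≤ q - 1), ← Finset.prod_pow_eq_pow_sum]
  exact hpi

variable {n : ℕ}

lemma hermiteMv_mul_hermiteMv (α β : Fin n → ℕ) (x : Fin n → ℝ) :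
    hermiteMv α x * hermiteMv β x = ∏ i, hermiteFn (α i) (x i) * hermiteFn (β i) (x i) :=
  Finset.prod_mul_distrib.symm

lemma integrable_hermiteMv_mul_hermiteMv (α β : Fin n → ℕ) :
    Integrable (fun x => hermiteMv α x * hermiteMv β x) (gaussianN n) := by
  simp_rw [hermiteMv_mul_hermiteMv]
  exact Integrable.fintype_prod (f := fun i t => hermiteFn (α i) t * hermiteFn (β i) t)
    fun i => integrable_hermiteFn_mul_hermiteFn _ _

lemma integral_hermiteMv_mul_hermiteMv (α β : Fin n → ℕ) :
    ∫ x, hermiteMv α x * hermiteMv β x ∂(gaussianN n) = if α = β then 1 else 0 := by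
  simp_rw [hermiteMv_mul_hermiteMv, gaussianN]
  rw [integral_fintype_prod_eq_prod (f := fun i t => hermiteFn (α i) t * hermiteFn (β i) t)]
  simp_rw [integral_hermiteFn_mul_hermiteFn, Finset.prod_ite_zero]
  simp [funext_iff]

lemma hermiteMv_zero (x : Fin n → ℝ) : hermiteMv 0 x = 1 := by
  simp [hermiteMv, hermiteFn]

lemma hermiteMv_update (α : Fin n → ℕ) (i : Fin n) (k : ℕ) (x : Fin n → ℝ) :
    hermiteMv (Function.update α i k) x =
      hermiteFn k (x i) * ∏ j ∈ Finset.univ.erase i, hermiteFn (α j) (x j) := by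
  rw [hermiteMv, ← Finset.mul_prod_erase _ _ (Finset.mem_univ i), Function.update_self]
  congr 1
  exact Finset.prod_congr rfl fun j hj => by
    rw [Function.update_of_ne (Finset.ne_of_mem_erase hj)]

lemma coord_mul_hermiteMv (i : Fin n) (α : Fin n → ℕ) (x : Fin n → ℝ) :
    x i * hermiteMv α x = √(α i + 1) * hermiteMv (Function.update α i (α i + 1)) x +
      √(α i) * hermiteMv (Function.update α i (α i - 1)) x := by
  conv_lhs => rw [← Function.update_eq_self i α]
  simp only [hermiteMv_update]
  linear_combination (∏ j ∈ Finset.univ.erase i, hermiteFn (α j) (x j)) * mul_hermiteFn (α i) (x i)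

/-- The linear span of the multivariate Hermite polynomials, as functions on `ℝ^n`. -/
noncomputable def hermiteSpan (n : ℕ) : Submodule ℝ ((Fin n → ℝ) → ℝ) :=
  Submodule.span ℝ (Set.range hermiteMv)

lemma hermiteMv_mem_hermiteSpan (α : Fin n → ℕ) : hermiteMv α ∈ hermiteSpan n :=
  Submodule.subset_span ⟨α, rfl⟩

lemma coord_mul_mem_hermiteSpan (i : Fin n) {f : (Fin n → ℝ) → ℝ} (hf : f ∈ hermiteSpan n) :
    (fun x => x i * f x) ∈ hermiteSpan n := by
  refine (Submodule.map_span_le (LinearMap.mulLeft ℝ fun x : Fin n → ℝ => x i) _ _).2 ?_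
    (Submodule.mem_map_of_mem hf)
  rintro _ ⟨α, rfl⟩
  have hmul : LinearMap.mulLeft ℝ (fun x : Fin n → ℝ => x i) (hermiteMv α) =
      √(α i + 1) • hermiteMv (Function.update α i (α i + 1)) +
        √(α i) • hermiteMv (Function.update α i (α i - 1)) :=
    funext (coord_mul_hermiteMv i α)
  rw [hmul]
  exact add_mem (Submodule.smul_mem _ _ (hermiteMv_mem_hermiteSpan _))
    (Submodule.smul_mem _ _ (hermiteMv_mem_hermiteSpan _))

variable (g : MvPolynomial (Fin n) ℝ)

lemma eval_mem_hermiteSpan : (fun x => eval x g) ∈ hermiteSpan n := by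
  induction g using MvPolynomial.induction_on with
  | C a =>
    convert (hermiteSpan n).smul_mem a (hermiteMv_mem_hermiteSpan 0) using 1
    ext x
    simp [hermiteMv_zero]
  | add p q hp hq => simp only [map_add]; exact add_mem hp hq
  | mul_X p i hp => simpa [mul_comm] using coord_mul_mem_hermiteSpan i hp

lemma exists_eval_eq_sum_hermiteMv :
    ∃ s : Finset (Fin n → ℕ), Function.support (hermiteCoeff g) ⊆ s ∧
      ∀ x, eval x g = ∑ α ∈ s, hermiteCoeff g α * hermiteMv α x := by
  obtain ⟨c, hc⟩ := Finsupp.mem_span_range_iff_exists_finsupp.1 (eval_mem_hermiteSpan g)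
  replace hc (x) : eval x g = ∑ α ∈ c.support, c α * hermiteMv α x := by
    rw [← congrFun hc x, Finsupp.sum, Finset.sum_apply]
    rfl
  have hcoeff : hermiteCoeff g = c := by
    ext β
    simp_rw [hermiteCoeff, hermiteCoeffF, hc, Finset.sum_mul, mul_assoc]
    rw [integral_finsetSum _ fun α _ => (integrable_hermiteMv_mul_hermiteMv α β).const_mul _]
    simp_rw [integral_const_mul, integral_hermiteMv_mul_hermiteMv]
    simp [eq_comm]
  exact ⟨c.support, by rw [hcoeff, Finsupp.fun_support_eq], by rwa [hcoeff]⟩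

lemma integral_eval_eq_hermiteCoeff_zero :
    ∫ x, eval x g ∂(gaussianN n) = hermiteCoeff g 0 := by
  simp [hermiteCoeff, hermiteCoeffF, hermiteMv_zero]

variable {g} {s : Finset (Fin n → ℕ)}

lemma eval_sub_integral_eq_sum (hs : Function.support (hermiteCoeff g) ⊆ s) {x : Fin n → ℝ}
    (hx : eval x g = ∑ α ∈ s, hermiteCoeff g α * hermiteMv α x) :
    eval x g - ∫ y, eval y g ∂(gaussianN n) =
      ∑ α ∈ s.erase 0, hermiteCoeff g α * hermiteMv α x := by
  rw [integral_eval_eq_hermiteCoeff_zero, hx]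
  by_cases h : (0 : Fin n → ℕ) ∈ s
  · rw [Finset.sum_erase_eq_sub h, hermiteMv_zero, mul_one]
  · rw [Finset.erase_eq_of_notMem h, Function.notMem_support.1 fun h0 => h (hs h0), sub_zero]

lemma hyperVar_eq_sum (hs : Function.support (hermiteCoeff g) ⊆ s) (R : ℝ) :
    hyperVar R g = ∑ α ∈ s.erase 0, R ^ (2 * ∑ i, α i) * hermiteCoeff g α ^ 2 := by
  have hpos (α : Fin n → ℕ) : 1 ≤ ∑ i, α i ↔ α ≠ 0 := by
    simp [Nat.one_le_iff_ne_zero, funext_iff]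
  simp_rw [hyperVar, hyperVarGE, hpos]
  rw [tsum_eq_sum (s := s.erase 0) fun α hα => ?_]
  · exact Finset.sum_congr rfl fun α hα => if_pos (Finset.ne_of_mem_erase hα)
  · rw [ite_eq_right_iff]
    intro hα0
    have hαs : α ∉ Function.support (hermiteCoeff g) := fun h =>
      hα (Finset.mem_erase.2 ⟨hα0, hs h⟩)
    rw [Function.notMem_support.1 hαs]
    simp

lemma integral_rpow_le_hyperVar (g : MvPolynomial (Fin n) ℝ) {R : ℝ} (hR : 1 ≤ R) :
    ∫ x, |eval x g - ∫ y, eval y g ∂(gaussianN n)| ^ (1 + R ^ 2) ∂(gaussianN n) ≤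
      hyperVar R g ^ ((1 + R ^ 2) / 2) := by
  have hq : 2 ≤ 1 + R ^ 2 := by nlinarith
  obtain ⟨s, hs, hg⟩ := exists_eval_eq_sum_hermiteMv g
  have hw (α : Fin n → ℕ) : (1 + R ^ 2 - 1) ^ ∑ i, α i = R ^ (2 * ∑ i, α i) := by
    rw [add_sub_cancel_left, pow_mul]
  have hmeas (α : Fin n → ℕ) : Measurable (hermiteMv α) :=
    Finset.measurable_fun_prod _ fun i _ => (measurable_hermiteFn _).comp (measurable_pi_apply i)
  have hint := (hypercontractive_gaussianN hq n).integral_abs_sum_rpow_le (by linarith)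
    (fun α => pow_nonneg (by linarith) _) hmeas (s.erase 0) (hermiteCoeff g)
  simpa only [eval_sub_integral_eq_sum hs (hg _), hyperVar_eq_sum hs, hw] using hint

end HermiteExpansion

/-- Hypervariance bound implies hyperconcentration: if `g` is a polynomial, `R > 1`,
`μ = E_{x ∼ N(0,1)^n}[g(x)]`, and `HyperVar_R[g] ≤ θ·μ²`, then
`(E[|g(x) - μ|^{1+R²}])^{1/(1+R²)} ≤ √θ·|μ|`. -/
theorem hypervar_to_hyperconcentration (n : ℕ) (g : MvPolynomial (Fin n) ℝ)
    (R θ : ℝ) (hR : 1 < R) (hθ : 0 ≤ θ)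
    (hv : hyperVar R g ≤ θ * (∫ x, eval x g ∂(gaussianN n)) ^ 2) :
    (∫ x, |eval x g - ∫ y, eval y g ∂(gaussianN n)| ^ (1 + R ^ 2) ∂(gaussianN n)) ^
        (1 / (1 + R ^ 2)) ≤
      Real.sqrt θ * |∫ x, eval x g ∂(gaussianN n)| := by
  have hv0 : 0 ≤ hyperVar R g := by
    refine tsum_nonneg fun α => ?_
    split_ifs <;> positivity
  have hI : 0 ≤ ∫ x, |eval x g - ∫ y, eval y g ∂(gaussianN n)| ^ (1 + R ^ 2) ∂(gaussianN n) :=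
    integral_nonneg fun x => by positivity
  calc _ ≤ (hyperVar R g ^ ((1 + R ^ 2) / 2)) ^ (1 / (1 + R ^ 2)) :=
        Real.rpow_le_rpow hI (integral_rpow_le_hyperVar g hR.le) (by positivity)
    _ = √(hyperVar R g) := by
        rw [← Real.rpow_mul hv0, Real.sqrt_eq_rpow]
        congr 1
        field_simp
    _ ≤ √(θ * (∫ x, eval x g ∂(gaussianN n)) ^ 2) := Real.sqrt_le_sqrt hv
    _ = √θ * |∫ x, eval x g ∂(gaussianN n)| := by
        rw [Real.sqrt_mul hθ, Real.sqrt_sq_eq_abs]
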